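/- Let C > 0 be real and let R : ℕ → ℝ satisfy: R(1) ≤ C, and for every integer m ≥ 2 there exists an integer j with 1 ≤ j < m, m − j ≥ √m/2, and R(m) ≤ R(j) + 6·C·√(m − j). Then for every integer m ≥ 1, R(m) ≤ 36·C·m^(3/4). -/

import Mathlib

/-!
Compare `R` with the potential `K * m ^ p`, where `0 ≤ p ≤ 1`. The graph of the concave function
`x ↦ x ^ p` lies below its tangent at `m`, so passing from `m` to `j` lowers `x ^ p` by at least
`p * m ^ (p - 1) * (m - j)`. When `m - j ≥ c * m ^ (2 * (1 - p))`, one factor `√(m - j)` of `m - j`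
compensates `m ^ (p - 1)`, and the drop is at least `p * √c * √(m - j)`. Hence each step of the
recursion is paid for by the drop of the potential as soon as `B ≤ K * p * √c`. The condition
`m - j ≥ √m / 2` is the case `p = 3 / 4`, `c = 1 / 2`.
-/

theorem le_apply_of_forall_exists_lt {ι α : Type*} [PartialOrder ι] [WellFoundedLT ι] [Preorder α]
    {f : ι → α} {a : ι} (h : ∀ i, a < i → ∃ j, a ≤ j ∧ j < i ∧ f i ≤ f j) {i : ι} (hi : a ≤ i) :
    f i ≤ f a := by
  induction i using WellFoundedLT.induction with
  | ind i ih =>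
    rcases hi.eq_or_lt with rfl | hai
    · exact le_rfl
    · obtain ⟨j, haj, hji, hij⟩ := h i hai
      exact hij.trans (ih j hji haj)

section

variable {x y p c : ℝ}

theorem mul_rpow_sub_one_mul_sub_le_rpow_sub_rpow (hx : 0 < x) (hy : 0 ≤ y) (hp₀ : 0 ≤ p)
    (hp₁ : p ≤ 1) : p * x ^ (p - 1) * (x - y) ≤ x ^ p - y ^ p := by
  have bernoulli : (y / x) ^ p ≤ 1 + p * (y / x - 1) := by
    simpa using rpow_one_add_le_one_add_mul_self
      (s := y / x - 1) (by linarith [div_nonneg hy hx.le]) hp₀ hp₁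
  have scaled : y ^ p ≤ x ^ p * (1 + p * (y / x - 1)) := by
    rwa [Real.div_rpow hy hx.le, div_le_iff₀' (Real.rpow_pos_of_pos hx p)] at bernoulli
  calc p * x ^ (p - 1) * (x - y) = x ^ p - x ^ p * (1 + p * (y / x - 1)) := by
        rw [Real.rpow_sub_one hx.ne']
        field_simp
        ring
    _ ≤ x ^ p - y ^ p := by gcongr

theorem mul_sqrt_sub_le_rpow_sub_rpow (hx : 0 < x) (hy : 0 ≤ y) (hp₀ : 0 ≤ p) (hp₁ : p ≤ 1)
    (hc : 0 ≤ c) (hxy : c * x ^ (2 * (1 - p)) ≤ x - y) :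
    p * √c * √(x - y) ≤ x ^ p - y ^ p := by
  have gap_nonneg : 0 ≤ x - y := le_trans (by positivity) hxy
  have sqrt_gap : √c * x ^ (1 - p) ≤ √(x - y) := by
    refine Real.le_sqrt_of_sq_le ?_
    rwa [mul_pow, Real.sq_sqrt hc, ← Real.rpow_mul_natCast hx.le, mul_comm (1 - p), Nat.cast_two]
  calc p * √c * √(x - y) = p * x ^ (p - 1) * (√c * x ^ (1 - p)) * √(x - y) := by
        have : x ^ (p - 1) * x ^ (1 - p) = 1 := by rw [← Real.rpow_add hx]; simp
        linear_combination (-(p * √c * √(x - y))) * this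
    _ ≤ p * x ^ (p - 1) * √(x - y) * √(x - y) := by gcongr
    _ = p * x ^ (p - 1) * (x - y) := by rw [mul_assoc, Real.mul_self_sqrt gap_nonneg]
    _ ≤ x ^ p - y ^ p := mul_rpow_sub_one_mul_sub_le_rpow_sub_rpow hx hy hp₀ hp₁

end

theorem eflh_regret_skeleton_basic_general {B K c p : ℝ} (hp₀ : 0 ≤ p) (hp₁ : p ≤ 1) (hc : 0 ≤ c)
    (hK : 0 ≤ K) (hB : B ≤ K * (p * √c)) {R : ℕ → ℝ} {a : ℕ}
    (hR : ∀ m : ℕ, a < m → ∃ j : ℕ, a ≤ j ∧ j < m ∧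
      c * (m : ℝ) ^ (2 * (1 - p)) ≤ (m : ℝ) - j ∧ R m ≤ R j + B * √((m : ℝ) - j))
    {m : ℕ} (hm : a ≤ m) :
    R m ≤ R a + K * ((m : ℝ) ^ p - (a : ℝ) ^ p) := by
  suffices R m - K * (m : ℝ) ^ p ≤ R a - K * (a : ℝ) ^ p by linarith
  refine le_apply_of_forall_exists_lt (f := fun n : ℕ ↦ R n - K * (n : ℝ) ^ p) (fun n han ↦ ?_) hm
  obtain ⟨j, haj, hjn, hgap, hstep⟩ := hR n han
  refine ⟨j, haj, hjn, ?_⟩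
  have step_le_drop : B * √((n : ℝ) - j) ≤ K * ((n : ℝ) ^ p - (j : ℝ) ^ p) :=
    calc B * √((n : ℝ) - j) ≤ K * (p * √c) * √((n : ℝ) - j) := by gcongr
      _ = K * (p * √c * √((n : ℝ) - j)) := mul_assoc ..
      _ ≤ K * ((n : ℝ) ^ p - (j : ℝ) ^ p) := by
        gcongr
        exact mul_sqrt_sub_le_rpow_sub_rpow (mod_cast han.pos) j.cast_nonneg hp₀ hp₁ hc hgap
  linarith

/-- The induction skeleton of Theorem 3.1 of the paper: the recursion
satisfied by the regret of EFLH yields the `36 C m^(3/4)` adaptive regret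
bound. -/
theorem eflh_regret_skeleton_basic (C : ℝ) (hC : 0 < C) (R : ℕ → ℝ)
    (hR₁ : R 1 ≤ C)
    (hRrec : ∀ m : ℕ, 2 ≤ m → ∃ j : ℕ, 1 ≤ j ∧ j < m ∧
      Real.sqrt m / 2 ≤ (m : ℝ) - (j : ℝ) ∧
      R m ≤ R j + 6 * C * Real.sqrt ((m : ℝ) - (j : ℝ))) :
    ∀ m : ℕ, 1 ≤ m → R m ≤ 36 * C * (m : ℝ) ^ ((3 : ℝ) / 4) := by
  intro m hm
  have tail (n : ℕ) : 1 / 2 * (n : ℝ) ^ (2 * (1 - 3 / 4) : ℝ) = √n / 2 := by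
    rw [Real.sqrt_eq_rpow]
    ring_nf
  have step_coeff : 6 * C ≤ 36 * C * (3 / 4 * √(1 / 2)) := by
    have : (1 / 2 : ℝ) ≤ √(1 / 2) := Real.le_sqrt_of_sq_le (by norm_num)
    nlinarith
  have bound := eflh_regret_skeleton_basic_general (by norm_num) (by norm_num) (by norm_num)
    (by positivity) step_coeff (by simpa only [tail] using! hRrec) hm
  rw [Nat.cast_one, Real.one_rpow] at bound
  linarith
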